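/- arXiv:1804.10821 — 2 statements merged into one kernel-verified Lean document; each statement's English description precedes it below -/
import Mathlib

section
/- Let 0 < r ≤ 1, let Λ be a nonempty index set, q ∈ ℕ, and let {X_𝐧(λ) : 𝐧 ∈ ℕ^q, λ ∈ Λ} and {Y_𝐧(λ) : 𝐧 ∈ ℕ^q, λ ∈ Λ} be real-valued random fields of stochastic processes on a common probability space satisfying the strict marginal stationarity condition (X_𝐧(λ), Y_𝐧(λ)) equals (X_𝐧(λ'), Y_𝐧(λ')) in distribution for all λ, λ' ∈ Λ and all 𝐧. Suppose that for each λ ∈ Λ the families {|X_𝐧(λ)|^r : 𝐧} and {|Y_𝐧(λ)|^r : 𝐧} are uniformly integrable, that for each 𝐧 the map ω ↦ sup_{λ∈Λ} |X_𝐧(λ)(ω) − Y_𝐧(λ)(ω)| is a (finite-valued) random variable, and that sup_{λ∈Λ} |X_𝐧(λ) − Y_𝐧(λ)| → 0 in probability as 𝐧 → ∞. Then sup_{λ∈Λ} |E|X_𝐧(λ)|^r − E|Y_𝐧(λ)|^r| → 0 as 𝐧 → ∞. -/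
open MeasureTheory ProbabilityTheory Filter

/-!
Stationarity makes `E|X_𝐧(λ)|^r` and `E|Y_𝐧(λ)|^r` independent of `λ`, so the supremum of their
differences is the difference at any fixed `λ`. There, subadditivity of `t ↦ t ^ r` gives
`||X|^r - |Y|^r| ≤ |X - Y|^r`, hence `|X|^r - |Y|^r → 0` in probability. This difference is
uniformly integrable, so by Vitali's theorem it tends to `0` in `L¹`.
-/

theorem abs_norm_rpow_sub_norm_rpow_le {E : Type*} [SeminormedAddCommGroup E] {r : ℝ}
    (hr0 : 0 ≤ r) (hr1 : r ≤ 1) (x y : E) : |‖x‖ ^ r - ‖y‖ ^ r| ≤ ‖x - y‖ ^ r := by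
  have norm_rpow_le (a b : E) : ‖a‖ ^ r ≤ ‖b‖ ^ r + ‖a - b‖ ^ r :=
    calc ‖a‖ ^ r ≤ (‖b‖ + ‖a - b‖) ^ r := by gcongr; exact norm_le_norm_add_norm_sub' a b
      _ ≤ ‖b‖ ^ r + ‖a - b‖ ^ r :=
        Real.rpow_add_le_add_rpow (norm_nonneg _) (norm_nonneg _) hr0 hr1
  rw [abs_sub_le_iff, sub_le_iff_le_add', sub_le_iff_le_add']
  exact ⟨norm_rpow_le x y, norm_sub_rev x y ▸ norm_rpow_le y x⟩

section ConvergenceInMeasure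

variable {Ω ι E : Type*} [MeasurableSpace Ω] {μ : Measure Ω} {L : Filter ι}

theorem tendstoInMeasure_zero_of_norm_le {F : Type*} [SeminormedAddCommGroup E]
    [SeminormedAddCommGroup F] {f : ι → Ω → E} {g : ι → Ω → F}
    (hg : TendstoInMeasure μ g L 0) (hfg : ∀ i ω, ‖f i ω‖ ≤ ‖g i ω‖) :
    TendstoInMeasure μ f L 0 := by
  simp only [tendstoInMeasure_iff_norm, Pi.zero_apply, sub_zero] at hg ⊢
  exact fun ε hε => tendsto_of_tendsto_of_tendsto_of_le_of_le tendsto_const_nhds (hg ε hε)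
    (fun _ => zero_le) fun i => measure_mono fun ω hω => le_trans hω (hfg i ω)

theorem tendstoInMeasure_norm_rpow_zero [SeminormedAddCommGroup E] {f : ι → Ω → E} {r : ℝ}
    (hr : 0 < r) (hf : TendstoInMeasure μ f L 0) :
    TendstoInMeasure μ (fun i ω => ‖f i ω‖ ^ r) L 0 := by
  simp only [tendstoInMeasure_iff_norm, Pi.zero_apply, sub_zero] at hf ⊢
  intro ε hε
  refine (hf (ε ^ r⁻¹) (by positivity)).congr fun i => ?_
  congr! 3 with ω
  rw [Real.norm_of_nonneg (by positivity), Real.rpow_inv_le_iff_of_pos hε.le (norm_nonneg _) hr]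

theorem tendsto_eLpNorm_sub_of_tendstoInMeasure [NormedAddCommGroup E] [IsFiniteMeasure μ]
    [L.IsCountablyGenerated] {p : ENNReal} (hp : 1 ≤ p) (hp_top : p ≠ ⊤) {f : ι → Ω → E}
    {g : Ω → E} (hf : ∀ i, AEStronglyMeasurable (f i) μ) (hg : MemLp g p μ)
    (hui : UnifIntegrable f p μ) (hfg : TendstoInMeasure μ f L g) :
    Tendsto (fun i => eLpNorm (f i - g) p μ) L (nhds 0) := by
  refine tendsto_of_seq_tendsto fun u hu => ?_
  have hui_u : UnifIntegrable (fun k => f (u k)) p μ := fun ε hε =>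
    let ⟨δ, hδ, hfδ⟩ := hui hε
    ⟨δ, hδ, fun k => hfδ (u k)⟩
  exact tendsto_Lp_finite_of_tendstoInMeasure hp hp_top (fun k => hf (u k)) hg hui_u (hfg.comp hu)

theorem tendsto_integral_sub_integral_of_tendstoInMeasure [NormedAddCommGroup E] [NormedSpace ℝ E]
    [IsFiniteMeasure μ] [L.IsCountablyGenerated] {f g : ι → Ω → E}
    (hf : UniformIntegrable f 1 μ) (hg : UniformIntegrable g 1 μ)
    (hfg : TendstoInMeasure μ (f - g) L 0) :
    Tendsto (fun i => (∫ ω, f i ω ∂μ) - ∫ ω, g i ω ∂μ) L (nhds 0) := by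
  have hf_int i : Integrable (f i) μ := memLp_one_iff_integrable.1 (hf.memLp i)
  have hg_int i : Integrable (g i) μ := memLp_one_iff_integrable.1 (hg.memLp i)
  have hsub_int i : Integrable ((f - g) i) μ := (hf_int i).sub (hg_int i)
  have hsub_ui : UnifIntegrable (f - g) 1 μ :=
    hf.unifIntegrable.sub hg.unifIntegrable le_rfl hf.aestronglyMeasurable hg.aestronglyMeasurable
  have hsub_L1 : Tendsto (fun i => eLpNorm ((f - g) i - 0) 1 μ) L (nhds 0) :=
    tendsto_eLpNorm_sub_of_tendstoInMeasure le_rfl ENNReal.one_ne_top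
      (fun i => (hsub_int i).aestronglyMeasurable) MemLp.zero hsub_ui hfg
  have hsub_integral := tendsto_integral_of_L1' 0 aestronglyMeasurable_zero
    (Eventually.of_forall hsub_int) hsub_L1
  simp only [Pi.zero_apply, integral_zero] at hsub_integral
  exact hsub_integral.congr fun i => integral_sub (hf_int i) (hg_int i)

theorem tendsto_integral_norm_rpow_sub_integral_norm_rpow [SeminormedAddCommGroup E]
    [IsFiniteMeasure μ] [L.IsCountablyGenerated] {r : ℝ} (hr0 : 0 < r) (hr1 : r ≤ 1)
    {X Y : ι → Ω → E} (hX : UniformIntegrable (fun i ω => ‖X i ω‖ ^ r) 1 μ)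
    (hY : UniformIntegrable (fun i ω => ‖Y i ω‖ ^ r) 1 μ)
    (hXY : TendstoInMeasure μ (X - Y) L 0) :
    Tendsto (fun i => (∫ ω, ‖X i ω‖ ^ r ∂μ) - ∫ ω, ‖Y i ω‖ ^ r ∂μ) L (nhds 0) := by
  refine tendsto_integral_sub_integral_of_tendstoInMeasure hX hY ?_
  refine tendstoInMeasure_zero_of_norm_le (tendstoInMeasure_norm_rpow_zero hr0 hXY) fun i ω => ?_
  exact (abs_norm_rpow_sub_norm_rpow_le hr0.le hr1 (X i ω) (Y i ω)).trans (le_abs_self _)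

end ConvergenceInMeasure

theorem integral_norm_rpow_eq_of_identDistrib {Ω Ω' E : Type*} [MeasurableSpace Ω]
    [MeasurableSpace Ω'] {μ : Measure Ω} {ν : Measure Ω'} [SeminormedAddCommGroup E]
    [MeasurableSpace E] [OpensMeasurableSpace E] {f : Ω → E} {g : Ω' → E}
    (h : IdentDistrib f g μ ν) (r : ℝ) : ∫ ω, ‖f ω‖ ^ r ∂μ = ∫ ω, ‖g ω‖ ^ r ∂ν :=
  (h.comp (continuous_norm.measurable.pow_const r)).integral_eq

theorem field_moment_convergence_abs_moments_general
    {Ω ι Λ E : Type*} [MeasurableSpace Ω] {P : Measure Ω} [IsFiniteMeasure P]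
    [SeminormedAddCommGroup E] [MeasurableSpace E] [OpensMeasurableSpace E]
    {L : Filter ι} [L.IsCountablyGenerated] {r : ℝ} (hr0 : 0 < r) (hr1 : r ≤ 1)
    {X Y : ι → Λ → Ω → E} (l₀ : Λ)
    (hXstat : ∀ i l, IdentDistrib (X i l) (X i l₀) P P)
    (hYstat : ∀ i l, IdentDistrib (Y i l) (Y i l₀) P P)
    (hXui : UniformIntegrable (fun i ω => ‖X i l₀ ω‖ ^ r) 1 P)
    (hYui : UniformIntegrable (fun i ω => ‖Y i l₀ ω‖ ^ r) 1 P)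
    (hconv : TendstoInMeasure P (fun i ω => X i l₀ ω - Y i l₀ ω) L 0) :
    Tendsto (fun i => ⨆ l, |(∫ ω, ‖X i l ω‖ ^ r ∂P) - ∫ ω, ‖Y i l ω‖ ^ r ∂P|) L (nhds 0) := by
  have : Nonempty Λ := ⟨l₀⟩
  simp_rw [fun i l => integral_norm_rpow_eq_of_identDistrib (hXstat i l) r,
    fun i l => integral_norm_rpow_eq_of_identDistrib (hYstat i l) r, ciSup_const]
  exact tendsto_zero_iff_abs_tendsto_zero _ |>.1
    (tendsto_integral_norm_rpow_sub_integral_norm_rpow hr0 hr1 hXui hYui hconv)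

/-- Under strict marginal stationarity, uniform integrability of
`{|X_𝐧(λ)|^r}` and `{|Y_𝐧(λ)|^r}` for each `λ`, measurability of the sup, and
`sup_λ |X_𝐧(λ) − Y_𝐧(λ)| → 0` in probability,
`sup_λ |E|X_𝐧(λ)|^r − E|Y_𝐧(λ)|^r| → 0` as `𝐧 → ∞`, for `0 < r ≤ 1`. -/
theorem field_moment_convergence_abs_moments
    {Ω : Type*} [MeasurableSpace Ω] (P : Measure Ω) [IsProbabilityMeasure P]
    {Λ : Type*} [Nonempty Λ] (q : ℕ)
    (r : ℝ) (hr0 : 0 < r) (hr1 : r ≤ 1)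
    (X Y : (Fin q → ℕ) → Λ → Ω → ℝ)
    (hXm : ∀ n l, Measurable (X n l)) (hYm : ∀ n l, Measurable (Y n l))
    (hstat : ∀ (n : Fin q → ℕ) (l l' : Λ),
      IdentDistrib (fun ω => (X n l ω, Y n l ω)) (fun ω => (X n l' ω, Y n l' ω)) P P)
    (hXui : ∀ l, UniformIntegrable (fun n ω => |X n l ω| ^ r) 1 P)
    (hYui : ∀ l, UniformIntegrable (fun n ω => |Y n l ω| ^ r) 1 P)
    (hbdd : ∀ (n : Fin q → ℕ) (ω : Ω), BddAbove (Set.range fun l => |X n l ω - Y n l ω|))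
    (hsm : ∀ n : Fin q → ℕ, Measurable fun ω => ⨆ l, |X n l ω - Y n l ω|)
    (hconv : TendstoInMeasure P (fun n ω => ⨆ l, |X n l ω - Y n l ω|) atTop 0) :
    Tendsto (fun n : Fin q → ℕ =>
        ⨆ l, |(∫ ω, |X n l ω| ^ r ∂P) - ∫ ω, |Y n l ω| ^ r ∂P|)
      atTop (nhds 0) := by
  obtain ⟨l₀⟩ := ‹Nonempty Λ›
  have hconv_l₀ : TendstoInMeasure P (fun n ω => X n l₀ ω - Y n l₀ ω) atTop 0 :=
    tendstoInMeasure_zero_of_norm_le hconv fun n ω => (le_ciSup (hbdd n ω) l₀).trans (le_abs_self _)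
  exact field_moment_convergence_abs_moments_general (X := X) (Y := Y) hr0 hr1 l₀
    (fun n l => (hstat n l l₀).comp measurable_fst) (fun n l => (hstat n l l₀).comp measurable_snd)
    (hXui l₀) (hYui l₀) hconv_l₀
end

section
/- Let 0 < r < ∞, let Λ be a nonempty index set, q ∈ ℕ, and let {X_𝐧(λ) : 𝐧 ∈ ℕ^q, λ ∈ Λ} and {Y_𝐧(λ) : 𝐧 ∈ ℕ^q, λ ∈ Λ} be real-valued random fields of stochastic processes on a common probability space satisfying the strict marginal stationarity condition (X_𝐧(λ), Y_𝐧(λ)) equals (X_𝐧(λ'), Y_𝐧(λ')) in distribution for all λ, λ' ∈ Λ and all 𝐧. Suppose that for each λ ∈ Λ the families {|X_𝐧(λ)|^r : 𝐧} and {|Y_𝐧(λ)|^r : 𝐧} are uniformly integrable, that for each 𝐧 the map ω ↦ sup_{λ∈Λ} |X_𝐧(λ)(ω) − Y_𝐧(λ)(ω)| is a (finite-valued) random variable, and that sup_{λ∈Λ} |X_𝐧(λ) − Y_𝐧(λ)| → 0 in probability as 𝐧 → ∞. Then sup_{λ∈Λ} |(E|X_𝐧(λ)|^r)^{1/r} −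 (E|Y_𝐧(λ)|^r)^{1/r}| → 0 as 𝐧 → ∞. -/
open MeasureTheory ProbabilityTheory Filter

/-!
Fix `λ₀`; by stationarity the supremum over `λ` is the single term at `λ₀`. There `X - Y` tends to
zero in probability, and `|X - Y| ^ r` is uniformly integrable since `Lʳ` is a quasi-normed space,
so `‖X - Y‖_r → 0` by Vitali's argument. For `r < 1` the quasi-norm `‖·‖_r` is not subadditive, but
`‖·‖_r ^ min 1 r` is for every `r > 0`, whence `‖X‖_r ^ min 1 r - ‖Y‖_r ^ min 1 r → 0`. Taking roots
is uniformly continuous on bounded sets, and `‖X‖_r`, `‖Y‖_r` are bounded.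
-/

open scoped ENNReal NNReal Topology Uniformity

section UniformContinuity

variable {ι : Type*} {F : Filter ι}

lemma tendsto_dist_zero_of_uniformContinuousOn {α β : Type*} [PseudoMetricSpace α]
    [PseudoMetricSpace β] {φ : α → β} {s : Set α} (hφ : UniformContinuousOn φ s) {a b : ι → α}
    (ha : ∀ i, a i ∈ s) (hb : ∀ i, b i ∈ s) (hab : Tendsto (fun i => dist (a i) (b i)) F (𝓝 0)) :
    Tendsto (fun i => dist (φ (a i)) (φ (b i))) F (𝓝 0) := by
  have hpair : Tendsto (fun i => (a i, b i)) F (𝓤 α ⊓ 𝓟 (s ×ˢ s)) :=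
    tendsto_inf.2 ⟨tendsto_uniformity_iff_dist_tendsto_zero.2 hab,
      tendsto_principal.2 <| .of_forall fun i => ⟨ha i, hb i⟩⟩
  exact tendsto_uniformity_iff_dist_tendsto_zero.1 (Tendsto.comp hφ hpair)

lemma tendsto_abs_sub_zero_of_tendsto_abs_rpow_sub_rpow_zero {c C : ℝ} (hc : 0 < c) {a b : ι → ℝ}
    (ha : ∀ i, a i ∈ Set.Icc 0 C) (hb : ∀ i, b i ∈ Set.Icc 0 C)
    (hab : Tendsto (fun i => |a i ^ c - b i ^ c|) F (𝓝 0)) :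
    Tendsto (fun i => |a i - b i|) F (𝓝 0) := by
  have hroot : UniformContinuousOn (fun t : ℝ => t ^ c⁻¹) (Set.Icc 0 (C ^ c)) :=
    isCompact_Icc.uniformContinuousOn_of_continuous
      (Real.continuous_rpow_const (inv_nonneg.2 hc.le)).continuousOn
  have hmem {t : ℝ} (ht : t ∈ Set.Icc 0 C) : t ^ c ∈ Set.Icc 0 (C ^ c) :=
    ⟨Real.rpow_nonneg ht.1 c, Real.rpow_le_rpow ht.1 ht.2 hc.le⟩
  have h := tendsto_dist_zero_of_uniformContinuousOn hroot
    (fun i => hmem (ha i)) (fun i => hmem (hb i)) hab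
  simpa only [Real.dist_eq, Real.rpow_rpow_inv (ha _).1 hc.ne',
    Real.rpow_rpow_inv (hb _).1 hc.ne'] using h

end UniformContinuity

section LpQuasiNorm

variable {Ω E : Type*} [MeasurableSpace Ω] {μ : Measure Ω} [NormedAddCommGroup E] {p : ℝ≥0∞}

lemma eLpNorm_add_rpow_le {f g : Ω → E} (hf : AEStronglyMeasurable f μ)
    (hg : AEStronglyMeasurable g μ) :
    eLpNorm (f + g) p μ ^ (min 1 p).toReal
      ≤ eLpNorm f p μ ^ (min 1 p).toReal + eLpNorm g p μ ^ (min 1 p).toReal := by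
  rcases le_total 1 p with hp | hp
  · simpa [min_eq_left hp] using eLpNorm_add_le hf hg hp
  rw [min_eq_right hp]
  rcases eq_or_ne p 0 with rfl | hp₀
  · simp
  lift p to ℝ≥0 using (hp.trans_lt ENNReal.one_lt_top).ne
  norm_cast at hp hp₀
  simp only [ENNReal.coe_toReal, eLpNorm_nnreal_pow_eq_lintegral hp₀]
  calc ∫⁻ x, ‖f x + g x‖ₑ ^ (p : ℝ) ∂μ
      ≤ ∫⁻ x, (‖f x‖ₑ ^ (p : ℝ) + ‖g x‖ₑ ^ (p : ℝ)) ∂μ := by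
        gcongr with x
        exact (ENNReal.rpow_le_rpow (enorm_add_le _ _) p.2).trans
          (ENNReal.rpow_add_le_add_rpow _ _ p.2 hp)
    _ = ∫⁻ x, ‖f x‖ₑ ^ (p : ℝ) ∂μ + ∫⁻ x, ‖g x‖ₑ ^ (p : ℝ) ∂μ :=
        lintegral_add_left' (hf.enorm.pow_const _) _

lemma lpNorm_add_rpow_le {f g : Ω → E} (hf : MemLp f p μ) (hg : MemLp g p μ) :
    lpNorm (f + g) p μ ^ (min 1 p).toReal
      ≤ lpNorm f p μ ^ (min 1 p).toReal + lpNorm g p μ ^ (min 1 p).toReal := by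
  have hne {h : Ω → E} (hh : MemLp h p μ) : eLpNorm h p μ ^ (min 1 p).toReal ≠ ∞ :=
    ENNReal.rpow_ne_top_of_nonneg ENNReal.toReal_nonneg hh.eLpNorm_ne_top
  have h := ENNReal.toReal_mono (ENNReal.add_ne_top.2 ⟨hne hf, hne hg⟩)
    (eLpNorm_add_rpow_le hf.1 hg.1)
  rwa [ENNReal.toReal_add (hne hf) (hne hg), ← ENNReal.toReal_rpow, ← ENNReal.toReal_rpow,
    ← ENNReal.toReal_rpow, toReal_eLpNorm (hf.1.add hg.1), toReal_eLpNorm hf.1,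
    toReal_eLpNorm hg.1] at h

lemma abs_lpNorm_rpow_sub_lpNorm_rpow_le {f g : Ω → E} (hf : MemLp f p μ) (hg : MemLp g p μ) :
    |lpNorm f p μ ^ (min 1 p).toReal - lpNorm g p μ ^ (min 1 p).toReal|
      ≤ lpNorm (f - g) p μ ^ (min 1 p).toReal := by
  have hfg := lpNorm_add_rpow_le (hf.sub hg) hg
  have hgf := lpNorm_add_rpow_le (hg.sub hf) hf
  rw [sub_add_cancel] at hfg hgf
  rw [lpNorm_sub_comm] at hgf
  exact abs_sub_le_iff.2 ⟨sub_le_iff_le_add.2 hfg, sub_le_iff_le_add.2 hgf⟩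

lemma tendsto_abs_lpNorm_sub_lpNorm_zero {ι : Type*} {F : Filter ι} {f g : ι → Ω → E} {C : ℝ}
    (hf : ∀ i, MemLp (f i) p μ) (hg : ∀ i, MemLp (g i) p μ)
    (hfC : ∀ i, lpNorm (f i) p μ ≤ C) (hgC : ∀ i, lpNorm (g i) p μ ≤ C)
    (hfg : Tendsto (fun i => lpNorm (f i - g i) p μ) F (𝓝 0)) :
    Tendsto (fun i => |lpNorm (f i) p μ - lpNorm (g i) p μ|) F (𝓝 0) := by
  rcases eq_or_ne p 0 with rfl | hp
  · simpa using tendsto_const_nhds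
  have hc : 0 < (min 1 p).toReal := ENNReal.toReal_pos (by simp [hp]) (by simp)
  refine tendsto_abs_sub_zero_of_tendsto_abs_rpow_sub_rpow_zero hc
    (fun i => ⟨lpNorm_nonneg, hfC i⟩) (fun i => ⟨lpNorm_nonneg, hgC i⟩) ?_
  refine squeeze_zero (fun i => abs_nonneg _)
    (fun i => abs_lpNorm_rpow_sub_lpNorm_rpow_le (hf i) (hg i)) ?_
  simpa [Real.zero_rpow hc.ne'] using hfg.rpow_const (Or.inr hc.le)

lemma integral_norm_rpow_rpow_one_div_eq_lpNorm {r : ℝ} (hr : 0 < r) {f : Ω → E}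
    (hf : AEStronglyMeasurable f μ) :
    (∫ ω, ‖f ω‖ ^ r ∂μ) ^ (1 / r) = lpNorm f (ENNReal.ofReal r) μ := by
  rw [lpNorm_eq_integral_norm_rpow_toReal (ENNReal.ofReal_pos.2 hr).ne' ENNReal.ofReal_ne_top hf,
    ENNReal.toReal_ofReal hr.le, one_div]

end LpQuasiNorm

section UniformIntegrability

variable {Ω E ι : Type*} [MeasurableSpace Ω] {μ : Measure Ω} [NormedAddCommGroup E] {p : ℝ≥0∞}
  {f g : ι → Ω → E} {F : Filter ι}

lemma exists_forall_eLpNorm_indicator_le_of_unifIntegrable (hf : UnifIntegrable f p μ) {ε : ℝ≥0∞}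
    (hε : ε ≠ 0) :
    ∃ δ : ℝ, 0 < δ ∧ ∀ i s, MeasurableSet s → μ s ≤ ENNReal.ofReal δ →
      eLpNorm (s.indicator (f i)) p μ ≤ ε := by
  obtain ⟨ε', hε'_pos, hε'⟩ := ENNReal.lt_iff_exists_nnreal_btwn.1 (pos_iff_ne_zero.2 hε)
  obtain ⟨δ, hδ, hfδ⟩ := hf (ε := ε') (by exact_mod_cast hε'_pos)
  refine ⟨δ, hδ, fun i s hs hμs => (hfδ i s hs hμs).trans ?_⟩
  simpa using hε'.le

lemma unifIntegrable_sub (hf : UnifIntegrable f p μ) (hg : UnifIntegrable g p μ)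
    (hf_meas : ∀ i, AEStronglyMeasurable (f i) μ) (hg_meas : ∀ i, AEStronglyMeasurable (g i) μ) :
    UnifIntegrable (f - g) p μ := by
  intro ε hε
  obtain ⟨η, hη, hη_add⟩ := exists_Lp_half E μ p (ENNReal.ofReal_pos.2 hε).ne'
  obtain ⟨δ₁, hδ₁, hfδ⟩ := exists_forall_eLpNorm_indicator_le_of_unifIntegrable hf hη.ne'
  obtain ⟨δ₂, hδ₂, hgδ⟩ := exists_forall_eLpNorm_indicator_le_of_unifIntegrable hg.neg hη.ne'
  refine ⟨min δ₁ δ₂, lt_min hδ₁ hδ₂, fun i s hs hμs => ?_⟩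
  rw [sub_eq_add_neg, Pi.add_apply, Set.indicator_add']
  exact (hη_add _ _ ((hf_meas i).indicator hs) ((hg_meas i).neg.indicator hs)
    (hfδ i s hs (hμs.trans (ENNReal.ofReal_le_ofReal (min_le_left _ _))))
    (hgδ i s hs (hμs.trans (ENNReal.ofReal_le_ofReal (min_le_right _ _))))).le

lemma exists_pos_forall_eLpNorm_le_of_norm_le [IsFiniteMeasure μ] {ε : ℝ≥0∞} (hε : ε ≠ 0) :
    ∃ d : ℝ, 0 < d ∧ ∀ h : Ω → E, (∀ x, ‖h x‖ ≤ d) → eLpNorm h p μ ≤ ε := by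
  have hμ : μ Set.univ ^ p.toReal⁻¹ ≠ ∞ :=
    ENNReal.rpow_ne_top_of_nonneg (inv_nonneg.2 ENNReal.toReal_nonneg) (measure_ne_top _ _)
  obtain ⟨d, hd, hdε⟩ := ENNReal.exists_nnreal_pos_mul_lt hμ hε
  refine ⟨d, hd, fun h hh => (eLpNorm_le_of_ae_bound (.of_forall hh)).trans ?_⟩
  rw [ENNReal.ofReal_coe_nnreal, mul_comm]
  exact hdε.le

theorem tendsto_eLpNorm_zero_of_tendstoInMeasure [IsFiniteMeasure μ]
    (hf_meas : ∀ i, AEStronglyMeasurable (f i) μ) (hf : UnifIntegrable f p μ)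
    (hfF : TendstoInMeasure μ f F 0) :
    Tendsto (fun i => eLpNorm (f i) p μ) F (𝓝 0) := by
  refine ENNReal.tendsto_nhds_zero.2 fun ε hε => ?_
  obtain ⟨η, hη, hη_add⟩ := exists_Lp_half E μ p hε.ne'
  obtain ⟨δ, hδ, hfδ⟩ := exists_forall_eLpNorm_indicator_le_of_unifIntegrable hf hη.ne'
  obtain ⟨d, hd, hd_small⟩ :=
    exists_pos_forall_eLpNorm_le_of_norm_le (μ := μ) (E := E) (p := p) hη.ne'
  have hlarge : ∀ᶠ i in F, μ {x | d ≤ ‖f i x‖} ≤ ENNReal.ofReal δ := by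
    simpa using ENNReal.tendsto_nhds_zero.1 (tendstoInMeasure_iff_norm.1 hfF d hd) _
      (ENNReal.ofReal_pos.2 hδ)
  filter_upwards [hlarge] with i hi
  set s := toMeasurable μ {x | d ≤ ‖f i x‖}
  have hs : MeasurableSet s := measurableSet_toMeasurable _ _
  have hμs : μ s ≤ ENNReal.ofReal δ := (measure_toMeasurable _).trans_le hi
  have hsmall : ∀ x, ‖sᶜ.indicator (f i) x‖ ≤ d := fun x => by
    by_cases hx : x ∈ s
    · simpa [hx] using hd.le
    · have hxd : ¬ d ≤ ‖f i x‖ := fun h => hx (subset_toMeasurable μ _ h)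
      simpa [hx] using (not_le.1 hxd).le
  rw [← Set.indicator_self_add_compl s (f i)]
  exact (hη_add _ _ ((hf_meas i).indicator hs) ((hf_meas i).indicator hs.compl)
    (hfδ i s hs hμs) (hd_small _ hsmall)).le

lemma uniformIntegrable_of_uniformIntegrable_norm_rpow {r : ℝ} (hr : 0 < r)
    (hf_meas : ∀ i, AEStronglyMeasurable (f i) μ)
    (hf : UniformIntegrable (fun i x => ‖f i x‖ ^ r) p μ) :
    UniformIntegrable f (p * ENNReal.ofReal r) μ := by
  obtain ⟨-, hf_unif, C, hC⟩ := hf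
  refine ⟨hf_meas, fun ε hε => ?_, C ^ r⁻¹, fun i => ?_⟩
  · obtain ⟨δ, hδ, hfδ⟩ := hf_unif (Real.rpow_pos_of_pos hε r)
    refine ⟨δ, hδ, fun i s hs hμs => ?_⟩
    have hind : s.indicator (fun x => ‖f i x‖ ^ r) = fun x => ‖s.indicator (f i) x‖ ^ r := by
      ext x
      by_cases hx : x ∈ s <;> simp [hx, Real.zero_rpow hr.ne']
    have h := hfδ i s hs hμs
    rwa [hind, eLpNorm_norm_rpow _ hr, ← ENNReal.ofReal_rpow_of_pos hε,
      ENNReal.rpow_le_rpow_iff hr] at h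
  · have h := hC i
    rwa [eLpNorm_norm_rpow _ hr, ← ENNReal.le_rpow_inv_iff hr,
      ← ENNReal.coe_rpow_of_nonneg _ (inv_nonneg.2 hr.le)] at h

lemma exists_forall_lpNorm_le_of_uniformIntegrable (hf : UniformIntegrable f p μ) :
    ∃ C : ℝ, ∀ i, lpNorm (f i) p μ ≤ C := by
  obtain ⟨hf_meas, -, C, hC⟩ := hf
  refine ⟨C, fun i => ?_⟩
  rw [← toReal_eLpNorm (hf_meas i)]
  exact ENNReal.toReal_mono ENNReal.coe_ne_top (hC i)

theorem tendsto_abs_lpNorm_sub_lpNorm_zero_of_tendstoInMeasure [IsFiniteMeasure μ]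
    (hf : UniformIntegrable f p μ) (hg : UniformIntegrable g p μ)
    (hfg : TendstoInMeasure μ (f - g) F 0) :
    Tendsto (fun i => |lpNorm (f i) p μ - lpNorm (g i) p μ|) F (𝓝 0) := by
  have hsub_meas (i : ι) : AEStronglyMeasurable ((f - g) i) μ := (hf.1 i).sub (hg.1 i)
  have hsub : Tendsto (fun i => lpNorm (f i - g i) p μ) F (𝓝 0) := by
    have h := (ENNReal.tendsto_toReal ENNReal.zero_ne_top).comp <|
      tendsto_eLpNorm_zero_of_tendstoInMeasure hsub_meas
        (unifIntegrable_sub hf.2.1 hg.2.1 hf.1 hg.1) hfg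
    exact h.congr fun i => toReal_eLpNorm (hsub_meas i)
  obtain ⟨C, hC⟩ := exists_forall_lpNorm_le_of_uniformIntegrable hf
  obtain ⟨D, hD⟩ := exists_forall_lpNorm_le_of_uniformIntegrable hg
  exact tendsto_abs_lpNorm_sub_lpNorm_zero hf.memLp hg.memLp
    (fun i => (hC i).trans (le_max_left C D)) (fun i => (hD i).trans (le_max_right C D)) hsub

lemma tendstoInMeasure_zero_of_iSup_norm {Λ : Type*} {Z : ι → Λ → Ω → E}
    (hbdd : ∀ i ω, BddAbove (Set.range fun l => ‖Z i l ω‖))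
    (hZ : TendstoInMeasure μ (fun i ω => ⨆ l, ‖Z i l ω‖) F 0) (l : Λ) :
    TendstoInMeasure μ (fun i => Z i l) F 0 := by
  rw [tendstoInMeasure_iff_norm] at hZ ⊢
  intro ε hε
  refine tendsto_of_tendsto_of_tendsto_of_le_of_le tendsto_const_nhds (hZ ε hε)
    (fun _ => zero_le) fun i => measure_mono fun ω hω => ?_
  simp only [Set.mem_ofPred_eq, Pi.zero_apply, sub_zero] at hω ⊢
  exact (hω.trans (le_ciSup (hbdd i ω) l)).trans (Real.le_norm_self _)

end UniformIntegrability

theorem field_Lr_norm_convergence_general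
    {Ω E ι Λ : Type*} [MeasurableSpace Ω] {P : Measure Ω} [IsFiniteMeasure P]
    [NormedAddCommGroup E] [MeasurableSpace E] [OpensMeasurableSpace E] {F : Filter ι}
    {r : ℝ} (hr : 0 < r) {X Y : ι → Λ → Ω → E} (l₀ : Λ)
    (hXm : ∀ n, AEStronglyMeasurable (X n l₀) P) (hYm : ∀ n, AEStronglyMeasurable (Y n l₀) P)
    (hX : ∀ n l, IdentDistrib (X n l) (X n l₀) P P)
    (hY : ∀ n l, IdentDistrib (Y n l) (Y n l₀) P P)
    (hXui : UniformIntegrable (fun n ω => ‖X n l₀ ω‖ ^ r) 1 P)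
    (hYui : UniformIntegrable (fun n ω => ‖Y n l₀ ω‖ ^ r) 1 P)
    (hconv : TendstoInMeasure P (fun n => X n l₀ - Y n l₀) F 0) :
    Tendsto (fun n => ⨆ l, |(∫ ω, ‖X n l ω‖ ^ r ∂P) ^ (1 / r) - (∫ ω, ‖Y n l ω‖ ^ r ∂P) ^ (1 / r)|)
      F (𝓝 0) := by
  have : Nonempty Λ := ⟨l₀⟩
  have hmoment {Z Z' : Ω → E} (h : IdentDistrib Z Z' P P) :
      ∫ ω, ‖Z ω‖ ^ r ∂P = ∫ ω, ‖Z' ω‖ ^ r ∂P :=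
    (h.norm.comp (u := fun t : ℝ => t ^ r) (by fun_prop)).integral_eq
  simp only [hmoment (hX _ _), hmoment (hY _ _), ciSup_const,
    integral_norm_rpow_rpow_one_div_eq_lpNorm hr (hXm _),
    integral_norm_rpow_rpow_one_div_eq_lpNorm hr (hYm _)]
  have hXr := uniformIntegrable_of_uniformIntegrable_norm_rpow hr hXm hXui
  have hYr := uniformIntegrable_of_uniformIntegrable_norm_rpow hr hYm hYui
  rw [one_mul] at hXr hYr
  exact tendsto_abs_lpNorm_sub_lpNorm_zero_of_tendstoInMeasure hXr hYr hconv

/-- Under strict marginal stationarity, uniform integrability of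
`{|X_𝐧(λ)|^r}` and `{|Y_𝐧(λ)|^r}` for each `λ`, measurability of the sup, and
`sup_λ |X_𝐧(λ) − Y_𝐧(λ)| → 0` in probability,
`sup_λ |(E|X_𝐧(λ)|^r)^{1/r} − (E|Y_𝐧(λ)|^r)^{1/r}| → 0` as `𝐧 → ∞`, for `0 < r < ∞`. -/
theorem field_Lr_norm_convergence
    {Ω : Type*} [MeasurableSpace Ω] (P : Measure Ω) [IsProbabilityMeasure P]
    {Λ : Type*} [Nonempty Λ] (q : ℕ)
    (r : ℝ) (hr0 : 0 < r)
    (X Y : (Fin q → ℕ) → Λ → Ω → ℝ)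
    (hXm : ∀ n l, Measurable (X n l)) (hYm : ∀ n l, Measurable (Y n l))
    (hstat : ∀ (n : Fin q → ℕ) (l l' : Λ),
      IdentDistrib (fun ω => (X n l ω, Y n l ω)) (fun ω => (X n l' ω, Y n l' ω)) P P)
    (hXui : ∀ l, UniformIntegrable (fun n ω => |X n l ω| ^ r) 1 P)
    (hYui : ∀ l, UniformIntegrable (fun n ω => |Y n l ω| ^ r) 1 P)
    (hbdd : ∀ (n : Fin q → ℕ) (ω : Ω), BddAbove (Set.range fun l => |X n l ω - Y n l ω|))
    (hsm : ∀ n : Fin q → ℕ, Measurable fun ω => ⨆ l, |X n l ω - Y n l ω|)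
    (hconv : TendstoInMeasure P (fun n ω => ⨆ l, |X n l ω - Y n l ω|) atTop 0) :
    Tendsto (fun n : Fin q → ℕ =>
        ⨆ l, |(∫ ω, |X n l ω| ^ r ∂P) ^ (1 / r) - (∫ ω, |Y n l ω| ^ r ∂P) ^ (1 / r)|)
      atTop (nhds 0) := by
  obtain ⟨l₀⟩ := ‹Nonempty Λ›
  exact field_Lr_norm_convergence_general (X := X) (Y := Y) hr0 l₀
    (fun n => (hXm n l₀).aestronglyMeasurable) (fun n => (hYm n l₀).aestronglyMeasurable)
    (fun n l => (hstat n l l₀).comp measurable_fst) (fun n l => (hstat n l l₀).comp measurable_snd)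
    (hXui l₀) (hYui l₀)
    (tendstoInMeasure_zero_of_iSup_norm (Z := fun n l => X n l - Y n l) hbdd hconv l₀)
end
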